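/- (Error bound for the approximate first passage time distribution.) Let b : [0,∞) → ℝ be continuous with b(0) > 0 and t0 > 0. Let μ̃ be a finite nonnegative Borel measure on [2b(0),∞) and write r̃(t,x) := r_{μ̃}(t,x). Let ζ1 ∈ [0,1), ζ2 > 0, and let G : (0,t0] × ℝ → [0,1] be measurable (G(t,x) plays the role of the conditional crossing probability P(τ ≤ t | W_t = x)) with (1−ζ1)·r̃(t,x) ≤ G(t,x) ≤ (1+ζ2)·r̃(t,x) for all t ∈ (0,t0] and all x < b(t). Define, with Φ the standard normal cumulative distribution function and p_t(x) := (2πt)^{−1/2}·exp(−x²/(2t)), F(t) := 1 − Φ(b(t)/√t) + ∫_{(−∞, b(t))} G(t,x)·p_t(x) dx and F̃(t) := 1 − Φ(b(t)/√t) + ∫_{(−∞, b(t))} r̃(t,x)·p_t(x) dx. If F̃(t) ≤ 1 for all t ∈ (0,t0], then sup_{t ∈ (0,t0]} |F(t) − F̃(t)| ≤ max(ζ1, ζ2). -/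

import Mathlib

open MeasureTheory Set Filter
open scoped ENNReal NNReal Topology

noncomputable def rTheta (θ t x : ℝ) : ℝ := Real.exp (-θ ^ 2 / (2 * t) + θ * x / t)

noncomputable def rMu (μ : Measure ℝ) (t x : ℝ) : ℝ≥0∞ :=
  ∫⁻ θ, ENNReal.ofReal (rTheta θ t x) ∂μ

/-- The standard normal cumulative distribution function. -/
noncomputable def stdNormalCDF (y : ℝ) : ℝ :=
  ∫ u in Set.Iio y, (Real.sqrt (2 * Real.pi))⁻¹ * Real.exp (-u ^ 2 / 2)

/-- The Gaussian transition density `p_t(x) = (2πt)^{-1/2} exp(-x²/(2t))`. -/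
noncomputable def gaussDens (t x : ℝ) : ℝ :=
  (Real.sqrt (2 * Real.pi * t))⁻¹ * Real.exp (-x ^ 2 / (2 * t))

/-! Integrating `(1 - ζ₁) r̃ ≤ G ≤ (1 + ζ₂) r̃` against `p_t` on `(-∞, b(t))` gives
`-ζ₁ R ≤ F - F̃ ≤ ζ₂ R` with `R := ∫ r̃ p_t`, and `F̃ ≤ 1` forces `R ≤ Φ(b(t)/√t) ≤ 1`.
Measurability of `r̃` rests on s-finiteness of `μ`, which follows from finiteness of the integral of
the positive function `θ ↦ r_θ(t, x)` for a single `x`. -/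

open ProbabilityTheory

theorem ne_top_of_ofReal_mul_le_ofReal {a p : ℝ} {q : ℝ≥0∞} (ha : 0 < a)
    (h : ENNReal.ofReal a * q ≤ ENNReal.ofReal p) : q ≠ ∞ :=
  (ENNReal.lt_top_of_mul_ne_top_right (h.trans_lt ENNReal.ofReal_lt_top).ne
    (ENNReal.ofReal_pos.2 ha).ne').ne

section IntegralComparison

variable {α : Type*} {m : MeasurableSpace α} {ν : Measure α} {f : α → ℝ} {r : α → ℝ≥0∞} {a : ℝ}

theorem integrable_toReal_of_ofReal_mul_le_ofReal (ha : 0 < a) (hr : AEMeasurable r ν)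
    (hf : Integrable f ν) (h : ∀ᵐ x ∂ν, ENNReal.ofReal a * r x ≤ ENNReal.ofReal (f x)) :
    Integrable (fun x ↦ (r x).toReal) ν := by
  have hlt : ENNReal.ofReal a * ∫⁻ x, r x ∂ν < ∞ :=
    calc ENNReal.ofReal a * ∫⁻ x, r x ∂ν
        = ∫⁻ x, ENNReal.ofReal a * r x ∂ν := (lintegral_const_mul'' _ hr).symm
      _ ≤ ∫⁻ x, ENNReal.ofReal (f x) ∂ν := lintegral_mono_ae h
      _ < ∞ := hf.lintegral_lt_top
  exact integrable_toReal_of_lintegral_ne_top hr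
    (ENNReal.lt_top_of_mul_ne_top_right hlt.ne (ENNReal.ofReal_pos.2 ha).ne').ne

theorem mul_integral_toReal_le_integral (ha : 0 ≤ a) (hf : Integrable f ν) (hf_nonneg : 0 ≤ᵐ[ν] f)
    (h : ∀ᵐ x ∂ν, ENNReal.ofReal a * r x ≤ ENNReal.ofReal (f x)) :
    a * ∫ x, (r x).toReal ∂ν ≤ ∫ x, f x ∂ν := by
  rw [← integral_const_mul]
  refine integral_mono_of_nonneg (.of_forall fun x ↦ mul_nonneg ha ENNReal.toReal_nonneg) hf ?_
  filter_upwards [h, hf_nonneg] with x hx hfx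
  simpa only [ENNReal.toReal_mul, ENNReal.toReal_ofReal ha, ENNReal.toReal_ofReal hfx]
    using ENNReal.toReal_mono ENNReal.ofReal_ne_top hx

theorem integral_le_mul_integral_toReal (ha : 0 ≤ a) (hf : Integrable f ν)
    (hr : Integrable (fun x ↦ (r x).toReal) ν) (hr_top : ∀ᵐ x ∂ν, r x ≠ ∞)
    (h : ∀ᵐ x ∂ν, ENNReal.ofReal (f x) ≤ ENNReal.ofReal a * r x) :
    ∫ x, f x ∂ν ≤ a * ∫ x, (r x).toReal ∂ν := by
  rw [← integral_const_mul]
  refine integral_mono_ae hf (hr.const_mul a) ?_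
  filter_upwards [h, hr_top] with x hx hrx
  simpa only [ENNReal.toReal_mul, ENNReal.toReal_ofReal ha] using
    (ENNReal.ofReal_le_iff_le_toReal (ENNReal.mul_ne_top ENNReal.ofReal_ne_top hrx)).1 hx

end IntegralComparison

theorem sFinite_of_lintegral_ne_top {α : Type*} {m : MeasurableSpace α} {μ : Measure α}
    {f : α → ℝ≥0∞} (hf : AEMeasurable f μ) (hf_pos : ∀ᵐ x ∂μ, f x ≠ 0)
    (h : ∫⁻ x, f x ∂μ ≠ ∞) : SFinite μ := by
  have := isFiniteMeasure_withDensity h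
  rw [← withDensity_inv_same₀ hf hf_pos ((ae_lt_top' hf h).mono fun _ ↦ ne_of_lt)]
  infer_instance

theorem measurable_rMu (μ : Measure ℝ) [SFinite μ] (t : ℝ) : Measurable (rMu μ t) := by
  refine Measurable.lintegral_prod_right'
    (f := fun p : ℝ × ℝ ↦ ENNReal.ofReal (rTheta p.2 t p.1)) ?_
  unfold rTheta
  fun_prop

theorem sFinite_of_rMu_ne_top {μ : Measure ℝ} {t x : ℝ} (h : rMu μ t x ≠ ∞) : SFinite μ := by
  refine sFinite_of_lintegral_ne_top (f := fun θ ↦ ENNReal.ofReal (rTheta θ t x)) ?_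
    (.of_forall fun θ ↦ (ENNReal.ofReal_pos.2 (Real.exp_pos _)).ne') h
  unfold rTheta
  fun_prop

theorem gaussDens_eq_gaussianPDFReal {t : ℝ} (ht : 0 ≤ t) :
    gaussDens t = gaussianPDFReal 0 t.toNNReal := by
  ext x
  simp [gaussDens, gaussianPDFReal, ht]

theorem setIntegral_mul_gaussDens {t : ℝ} (ht : 0 < t) (f : ℝ → ℝ) {s : Set ℝ}
    (hs : MeasurableSet s) :
    ∫ x in s, f x * gaussDens t x = ∫ x in s, f x ∂gaussianReal 0 t.toNNReal := by
  rw [gaussianReal_of_var_ne_zero 0 (Real.toNNReal_pos.2 ht).ne',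
    setIntegral_withDensity_eq_setIntegral_toReal_smul (measurable_gaussianPDF _ _)
      (.of_forall fun _ ↦ gaussianPDF_lt_top) f hs]
  simp only [toReal_gaussianPDF, smul_eq_mul, mul_comm, gaussDens_eq_gaussianPDFReal ht.le]

theorem stdNormalCDF_eq_measureReal_Iio (y : ℝ) :
    stdNormalCDF y = (gaussianReal 0 1).real (Iio y) := by
  simpa [stdNormalCDF, gaussDens] using
    setIntegral_mul_gaussDens one_pos (fun _ ↦ 1) (measurableSet_Iio (a := y))

theorem stdNormalCDF_le_one (y : ℝ) : stdNormalCDF y ≤ 1 :=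
  stdNormalCDF_eq_measureReal_Iio y ▸ measureReal_le_one

/-- The probability that a Brownian motion crosses a boundary with value `c` at time `t` before `t`,
when `g x` is the conditional crossing probability given the value `x < c` at time `t`; the term
`1 - Φ(c/√t)` accounts for the paths ending above the boundary. -/
noncomputable def crossingProb (t c : ℝ) (g : ℝ → ℝ) : ℝ :=
  1 - stdNormalCDF (c / Real.sqrt t) + ∫ x in Iio c, g x * gaussDens t x

theorem setIntegral_le_one_of_crossingProb_le_one {t c : ℝ} {g : ℝ → ℝ}
    (h : crossingProb t c g ≤ 1) : ∫ x in Iio c, g x * gaussDens t x ≤ 1 := by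
  unfold crossingProb at h
  linarith [stdNormalCDF_le_one (c / Real.sqrt t)]

theorem stmt_19_general {μ : Measure ℝ} {t c ζ₁ ζ₂ : ℝ} {g : ℝ → ℝ} (ht : 0 < t)
    (hζ₁ : ζ₁ ∈ Ico 0 1) (hζ₂ : 0 ≤ ζ₂)
    (hg : IntegrableOn g (Iio c) (gaussianReal 0 t.toNNReal)) (hg_nonneg : ∀ x < c, 0 ≤ g x)
    (hlow : ∀ x < c, ENNReal.ofReal (1 - ζ₁) * rMu μ t x ≤ ENNReal.ofReal (g x))
    (hhigh : ∀ x < c, ENNReal.ofReal (g x) ≤ ENNReal.ofReal (1 + ζ₂) * rMu μ t x)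
    (hle : crossingProb t c (fun x ↦ (rMu μ t x).toReal) ≤ 1) :
    crossingProb t c g - crossingProb t c (fun x ↦ (rMu μ t x).toReal) ∈ Icc (-ζ₁) ζ₂ := by
  have hpos : 0 < 1 - ζ₁ := sub_pos.2 hζ₁.2
  have hr_top : ∀ x < c, rMu μ t x ≠ ∞ := fun x hx ↦ ne_top_of_ofReal_mul_le_ofReal hpos (hlow x hx)
  have : SFinite μ := sFinite_of_rMu_ne_top (hr_top (c - 1) (sub_one_lt c))
  have hlow_ae := ae_restrict_of_forall_mem (μ := gaussianReal 0 t.toNNReal) measurableSet_Iio hlow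
  have hr : IntegrableOn (fun x ↦ (rMu μ t x).toReal) (Iio c) (gaussianReal 0 t.toNNReal) :=
    integrable_toReal_of_ofReal_mul_le_ofReal hpos (measurable_rMu μ t).aemeasurable hg hlow_ae
  have hlower : (1 - ζ₁) * ∫ x in Iio c, (rMu μ t x).toReal * gaussDens t x ≤
      ∫ x in Iio c, g x * gaussDens t x := by
    simp only [setIntegral_mul_gaussDens ht _ measurableSet_Iio]
    exact mul_integral_toReal_le_integral hpos.le hg
      (ae_restrict_of_forall_mem measurableSet_Iio hg_nonneg) hlow_ae
  have hupper : ∫ x in Iio c, g x * gaussDens t x ≤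
      (1 + ζ₂) * ∫ x in Iio c, (rMu μ t x).toReal * gaussDens t x := by
    simp only [setIntegral_mul_gaussDens ht _ measurableSet_Iio]
    exact integral_le_mul_integral_toReal (by positivity) hg hr
      (ae_restrict_of_forall_mem measurableSet_Iio hr_top)
      (ae_restrict_of_forall_mem measurableSet_Iio hhigh)
  have hR := setIntegral_le_one_of_crossingProb_le_one hle
  unfold crossingProb
  constructor
  · linarith [mul_le_of_le_one_right hζ₁.1 hR]
  · linarith [mul_le_of_le_one_right hζ₂ hR]

theorem stmt_19 (b : ℝ → ℝ) (hbcont : ContinuousOn b (Set.Ici 0)) (hb0 : 0 < b 0)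
    (t0 : ℝ) (ht0 : 0 < t0)
    (μt : Measure ℝ) [IsFiniteMeasure μt] (hμtsupp : μt (Set.Ici (2 * b 0))ᶜ = 0)
    (ζ1 ζ2 : ℝ) (hζ1 : ζ1 ∈ Set.Ico (0 : ℝ) 1) (hζ2 : 0 < ζ2)
    (G : ℝ → ℝ → ℝ) (hGmeas : Measurable (Function.uncurry G))
    (hGrange : ∀ t x, G t x ∈ Set.Icc (0 : ℝ) 1)
    (hGlow : ∀ t ∈ Set.Ioc 0 t0, ∀ x < b t,
      ENNReal.ofReal (1 - ζ1) * rMu μt t x ≤ ENNReal.ofReal (G t x))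
    (hGhigh : ∀ t ∈ Set.Ioc 0 t0, ∀ x < b t,
      ENNReal.ofReal (G t x) ≤ ENNReal.ofReal (1 + ζ2) * rMu μt t x)
    (F Ftil : ℝ → ℝ)
    (hF : ∀ t ∈ Set.Ioc 0 t0, F t = 1 - stdNormalCDF (b t / Real.sqrt t) +
      ∫ x in Set.Iio (b t), G t x * gaussDens t x)
    (hFtil : ∀ t ∈ Set.Ioc 0 t0, Ftil t = 1 - stdNormalCDF (b t / Real.sqrt t) +
      ∫ x in Set.Iio (b t), (rMu μt t x).toReal * gaussDens t x)
    (hFtil1 : ∀ t ∈ Set.Ioc 0 t0, Ftil t ≤ 1) :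
    ∀ t ∈ Set.Ioc 0 t0, |F t - Ftil t| ≤ max ζ1 ζ2 := by
  intro t ht
  have hG : IntegrableOn (G t) (Iio (b t)) (gaussianReal 0 t.toNNReal) :=
    .of_mem_Icc 0 1 hGmeas.of_uncurry_left.aemeasurable (.of_forall (hGrange t))
  have h := stmt_19_general ht.1 hζ1 hζ2.le hG (fun x _ ↦ (hGrange t x).1) (hGlow t ht)
    (hGhigh t ht) ((hFtil t ht).symm.trans_le (hFtil1 t ht))
  rw [hF t ht, hFtil t ht]
  exact abs_le.2 ⟨(neg_le_neg (le_max_left _ _)).trans h.1, h.2.trans (le_max_right _ _)⟩
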